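/- arXiv:2511.05287 — 2 statements merged into one kernel-verified Lean document; each statement's English description precedes it below -/
import Mathlib

section
/- Let R be a unique factorization domain, let k ≥ 1 be an integer, and let f be an algebraically primitive Dirichlet polynomial over R with min-degree m and degree n, m < n, f(m) ≠ 0 and f(n) ≠ 0. If S^k_rd(m,n) = ∅, then f is a product of at most k irreducible factors; concretely, f cannot be written as a product of k+1 nonconstant Dirichlet polynomials with coefficients in R. -/
/-!
Over a domain, lowest terms multiply to the lowest term and highest terms to the highest term, so
min-degree and degree are both multiplicative (`HasMinDeg.prod`, `HasMaxDeg.prod`). If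
`f = ∏ g_j` with `g_j` nonconstant of min-degree `c_j` and degree `d_j`, then `m = ∏ c_j` and
`n = ∏ d_j`. If some `c_j` equalled `d_j`, then `g_j` would be a monomial at `d_j ≥ 2` and `d_j` would
divide the whole support of `f`, against primitivity; so `c_j < d_j` for all `j`. Finally
`∏ (d_j / c_j) = n / m` has `k + 1` factors, so some factor is at most the geometric mean
`(n / m) ^ (1 / (k + 1))`, and that factor lies in `S^k_rd(m, n)`.
-/

namespace DirichletPoly

variable {R : Type*}

/-- A Dirichlet polynomial is an arithmetic function with finite support. -/
def IsDP [Zero R] (f : ArithmeticFunction R) : Prop := (Function.support ⇑f).Finite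

/-- `f` is nonconstant: its support contains some `i ≥ 2`. -/
def Nonconst [Zero R] (f : ArithmeticFunction R) : Prop := ∃ i : ℕ, 2 ≤ i ∧ f i ≠ 0

/-- `f` is irreducible over `R`: it cannot be written as a product of two nonconstant
Dirichlet polynomials with coefficients in `R`. -/
def IrreducibleDP [CommSemiring R] (f : ArithmeticFunction R) : Prop :=
  ¬ ∃ g h : ArithmeticFunction R, IsDP g ∧ IsDP h ∧ Nonconst g ∧ Nonconst h ∧ f = g * h

/-- `f` is algebraically primitive: the gcd of the elements of its support is `1`. -/
def AlgPrimitive [Zero R] (f : ArithmeticFunction R) : Prop :=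
  ∀ d : ℕ, (∀ i : ℕ, f i ≠ 0 → d ∣ i) → d = 1

/-- `f` is nonzero with min-degree `a`. -/
def HasMinDeg [Zero R] (f : ArithmeticFunction R) (a : ℕ) : Prop :=
  f a ≠ 0 ∧ ∀ i : ℕ, i < a → f i = 0

/-- `f` is nonzero with degree `a`; in particular its support is bounded, hence finite. -/
def HasMaxDeg [Zero R] (f : ArithmeticFunction R) (a : ℕ) : Prop :=
  f a ≠ 0 ∧ ∀ i : ℕ, a < i → f i = 0

lemma pos_of_apply_ne_zero [Zero R] {f : ArithmeticFunction R} {a : ℕ} (h : f a ≠ 0) : 0 < a := by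
  rcases Nat.eq_zero_or_pos a with rfl | h'
  · simp at h
  · exact h'

lemma HasMinDeg.unique [Zero R] {f : ArithmeticFunction R} {a b : ℕ}
    (ha : HasMinDeg f a) (hb : HasMinDeg f b) : a = b :=
  le_antisymm (not_lt.1 fun h => hb.1 (ha.2 b h)) (not_lt.1 fun h => ha.1 (hb.2 a h))

lemma HasMaxDeg.unique [Zero R] {f : ArithmeticFunction R} {a b : ℕ}
    (ha : HasMaxDeg f a) (hb : HasMaxDeg f b) : a = b :=
  le_antisymm (not_lt.1 fun h => ha.1 (hb.2 a h)) (not_lt.1 fun h => hb.1 (ha.2 b h))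

/-- A nonzero value of a Dirichlet product comes from nonzero values of the factors. -/
lemma exists_of_mul_apply_ne_zero [CommRing R] {f g : ArithmeticFunction R} {i : ℕ}
    (h : (f * g) i ≠ 0) : ∃ x y : ℕ, x * y = i ∧ f x ≠ 0 ∧ g y ≠ 0 := by
  rw [ArithmeticFunction.mul_apply] at h
  obtain ⟨⟨x, y⟩, hx, hne⟩ := Finset.exists_ne_zero_of_sum_ne_zero h
  exact ⟨x, y, (Nat.mem_divisorsAntidiagonal.1 hx).1, left_ne_zero_of_mul hne,
    right_ne_zero_of_mul hne⟩

/-- If `(a, b)` is the only pair of support elements with product `a * b`, the coefficient of the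
Dirichlet product there is the product of the coefficients. -/
lemma mul_apply_mul_ne_zero [CommRing R] [IsDomain R] {f g : ArithmeticFunction R} {a b : ℕ}
    (ha : f a ≠ 0) (hb : g b ≠ 0)
    (huniq : ∀ x y : ℕ, x * y = a * b → f x ≠ 0 → g y ≠ 0 → x = a ∧ y = b) :
    (f * g) (a * b) ≠ 0 := by
  rw [ArithmeticFunction.mul_apply, Finset.sum_eq_single (a, b)]
  · exact mul_ne_zero ha hb
  · rintro ⟨x, y⟩ hxy hne
    by_contra h0
    obtain ⟨h1, h2⟩ := huniq x y (Nat.mem_divisorsAntidiagonal.1 hxy).1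
      (left_ne_zero_of_mul h0) (right_ne_zero_of_mul h0)
    exact hne (by rw [h1, h2])
  · intro h
    exact absurd (Nat.mem_divisorsAntidiagonal.2 ⟨rfl, (Nat.mul_pos (pos_of_apply_ne_zero ha)
      (pos_of_apply_ne_zero hb)).ne'⟩) h

/-- Positive factors that are bounded termwise and have equal products agree. -/
lemma eq_and_eq_of_mul_eq {a b x y : ℕ} (ha : 0 < a) (hb : 0 < b) (hx : a ≤ x) (hy : b ≤ y)
    (h : x * y = a * b) : x = a ∧ y = b := by
  constructor
  · by_contra hne
    have : a < x := lt_of_le_of_ne hx (Ne.symm hne)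
    have := Nat.mul_lt_mul_of_lt_of_le this hy (hb.trans_le hy)
    omega
  · by_contra hne
    have : b < y := lt_of_le_of_ne hy (Ne.symm hne)
    have := Nat.mul_lt_mul_of_le_of_lt hx this (ha.trans_le hx)
    omega

lemma HasMinDeg.mul [CommRing R] [IsDomain R] {f g : ArithmeticFunction R} {a b : ℕ}
    (hf : HasMinDeg f a) (hg : HasMinDeg g b) : HasMinDeg (f * g) (a * b) := by
  have hfa : ∀ x, f x ≠ 0 → a ≤ x := fun x hx => not_lt.1 fun h => hx (hf.2 x h)
  have hgb : ∀ y, g y ≠ 0 → b ≤ y := fun y hy => not_lt.1 fun h => hy (hg.2 y h)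
  refine ⟨mul_apply_mul_ne_zero hf.1 hg.1 fun x y hxy hx hy =>
    eq_and_eq_of_mul_eq (pos_of_apply_ne_zero hf.1) (pos_of_apply_ne_zero hg.1)
      (hfa x hx) (hgb y hy) hxy, fun i hi => ?_⟩
  by_contra h
  obtain ⟨x, y, rfl, hx, hy⟩ := exists_of_mul_apply_ne_zero h
  exact absurd hi (not_lt.2 (Nat.mul_le_mul (hfa x hx) (hgb y hy)))

lemma HasMaxDeg.mul [CommRing R] [IsDomain R] {f g : ArithmeticFunction R} {a b : ℕ}
    (hf : HasMaxDeg f a) (hg : HasMaxDeg g b) : HasMaxDeg (f * g) (a * b) := by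
  have hfa : ∀ x, f x ≠ 0 → x ≤ a := fun x hx => not_lt.1 fun h => hx (hf.2 x h)
  have hgb : ∀ y, g y ≠ 0 → y ≤ b := fun y hy => not_lt.1 fun h => hy (hg.2 y h)
  refine ⟨mul_apply_mul_ne_zero hf.1 hg.1 fun x y hxy hx hy => ?_, fun i hi => ?_⟩
  · obtain ⟨h1, h2⟩ := eq_and_eq_of_mul_eq (pos_of_apply_ne_zero hx) (pos_of_apply_ne_zero hy)
      (hfa x hx) (hgb y hy) hxy.symm
    exact ⟨h1.symm, h2.symm⟩
  · by_contra h
    obtain ⟨x, y, rfl, hx, hy⟩ := exists_of_mul_apply_ne_zero h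
    exact absurd hi (not_lt.2 (Nat.mul_le_mul (hfa x hx) (hgb y hy)))

lemma HasMinDeg.prod [CommRing R] [IsDomain R] {ι : Type*} (s : Finset ι)
    {g : ι → ArithmeticFunction R} {c : ι → ℕ} (h : ∀ j, HasMinDeg (g j) (c j)) :
    HasMinDeg (∏ j ∈ s, g j) (∏ j ∈ s, c j) := by
  classical
  induction s using Finset.induction_on with
  | empty =>
    refine ⟨by simp, fun i hi => ?_⟩
    have : i = 0 := by simpa using hi
    simp [this]
  | insert j s hj ih =>
    rw [Finset.prod_insert hj, Finset.prod_insert hj]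
    exact (h j).mul ih

lemma HasMaxDeg.prod [CommRing R] [IsDomain R] {ι : Type*} (s : Finset ι)
    {g : ι → ArithmeticFunction R} {d : ι → ℕ} (h : ∀ j, HasMaxDeg (g j) (d j)) :
    HasMaxDeg (∏ j ∈ s, g j) (∏ j ∈ s, d j) := by
  classical
  induction s using Finset.induction_on with
  | empty =>
    refine ⟨by simp, fun i hi => ?_⟩
    have : 1 < i := by simpa using hi
    simpa using ArithmeticFunction.one_apply_ne this.ne'
  | insert j s hj ih =>
    rw [Finset.prod_insert hj, Finset.prod_insert hj]
    exact (h j).mul ih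

lemma exists_hasMinDeg [Zero R] {f : ArithmeticFunction R} (h : Nonconst f) :
    ∃ a, HasMinDeg f a := by
  classical
  obtain ⟨i, -, hi⟩ := h
  have hex : ∃ i, f i ≠ 0 := ⟨i, hi⟩
  exact ⟨Nat.find hex, Nat.find_spec hex, fun i hi => not_not.1 (Nat.find_min hex hi)⟩

lemma exists_hasMaxDeg [Zero R] {f : ArithmeticFunction R} (hfin : IsDP f) (h : Nonconst f) :
    ∃ a, 2 ≤ a ∧ HasMaxDeg f a := by
  obtain ⟨i, hi2, hi⟩ := h
  obtain ⟨a, ha, hmax⟩ := Set.exists_max_image _ id hfin ⟨i, hi⟩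
  exact ⟨a, hi2.trans (hmax i hi), ha, fun j hj => by_contra fun h => absurd hj (not_lt.2 (hmax j h))⟩

/-- If the set `S^k_rd(m,n)` of possible relative degrees
`d/c` with `d ∣ n`, `c ∣ m`, `1 < d/c ≤ (n/m)^(1/(k+1))` is empty, then an algebraically
primitive Dirichlet polynomial with min-degree `m` and degree `n` cannot be a product of
`k+1` nonconstant Dirichlet polynomials. -/
theorem srd_empty_few_factors
    [CommRing R] [IsDomain R] [UniqueFactorizationMonoid R]
    (k : ℕ) (hk : 1 ≤ k)
    (f : ArithmeticFunction R) (hfin : IsDP f) (hprim : AlgPrimitive f)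
    (m n : ℕ) (hmn : m < n)
    (hmin : f m ≠ 0) (hmin' : ∀ i : ℕ, i < m → f i = 0)
    (hdeg : f n ≠ 0) (hdeg' : ∀ i : ℕ, n < i → f i = 0)
    (hS : ¬ ∃ c d : ℕ, c ∣ m ∧ d ∣ n ∧ c < d ∧
      (d : ℝ) / (c : ℝ) ≤ ((n : ℝ) / (m : ℝ)) ^ ((1 : ℝ) / (k + 1))) :
    ¬ ∃ g : Fin (k + 1) → ArithmeticFunction R,
      (∀ j, IsDP (g j) ∧ Nonconst (g j)) ∧ f = ∏ j, g j := by
  rintro ⟨g, hg, rfl⟩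
  choose c hc using fun j => exists_hasMinDeg (hg j).2
  choose d hd2 hd using fun j => exists_hasMaxDeg (hg j).1 (hg j).2
  obtain rfl : m = ∏ j, c j :=
    HasMinDeg.unique ⟨hmin, hmin'⟩ (HasMinDeg.prod Finset.univ hc)
  obtain rfl : n = ∏ j, d j :=
    HasMaxDeg.unique ⟨hdeg, hdeg'⟩ (HasMaxDeg.prod Finset.univ hd)
  have hcd : ∀ j, c j < d j := by
    intro j
    by_contra hlt
    have hmono : ∀ x, g j x ≠ 0 → x = d j := fun x hx =>
      le_antisymm (not_lt.1 fun h => hx ((hd j).2 x h))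
        ((not_lt.1 hlt).trans (not_lt.1 fun h => hx ((hc j).2 x h)))
    have hone : d j = 1 := hprim (d j) fun i hi => by
      obtain ⟨q, hq⟩ := Finset.dvd_prod_of_mem g (Finset.mem_univ j)
      rw [hq] at hi
      obtain ⟨x, y, rfl, hx, -⟩ := exists_of_mul_apply_ne_zero hi
      exact hmono x hx ▸ dvd_mul_right x y
    exact absurd (hd2 j) (by omega)
  have hcpos : ∀ j, (0 : ℝ) < c j := fun j => by exact_mod_cast pos_of_apply_ne_zero (hc j).1
  have hdpos : ∀ j, (0 : ℝ) < d j := fun j => by exact_mod_cast pos_of_apply_ne_zero (hd j).1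
  set q : ℝ := ((∏ j, d j : ℕ) : ℝ) / ((∏ j, c j : ℕ) : ℝ) with hq
  have hqprod : q = ∏ j, (d j : ℝ) / (c j : ℝ) := by
    rw [hq, Finset.prod_div_distrib]
    push_cast
    rfl
  have hqpos : 0 < q := hqprod ▸ Finset.prod_pos fun j _ => div_pos (hdpos j) (hcpos j)
  have hbig : ∀ j, q ^ ((1 : ℝ) / (k + 1)) < (d j : ℝ) / (c j : ℝ) := fun j =>
    not_le.1 fun hle => hS ⟨c j, d j, Finset.dvd_prod_of_mem c (Finset.mem_univ j),
      Finset.dvd_prod_of_mem d (Finset.mem_univ j), hcd j, hle⟩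
  have hlt : ∏ _j : Fin (k + 1), q ^ ((1 : ℝ) / (k + 1)) < ∏ j, (d j : ℝ) / (c j : ℝ) :=
    Finset.prod_lt_prod_of_nonempty (fun _ _ => Real.rpow_pos_of_pos hqpos _)
      (fun j _ => hbig j) Finset.univ_nonempty
  have hroot : (q ^ ((1 : ℝ) / (k + 1))) ^ (k + 1) = q := by
    have := Real.rpow_inv_natCast_pow hqpos.le (Nat.succ_ne_zero k)
    rw [one_div]
    exact_mod_cast this
  rw [Finset.prod_const, Finset.card_univ, Fintype.card_fin, hroot, ← hqprod] at hlt
  exact lt_irrefl _ hlt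

end DirichletPoly
end

section
/- Let R be a unique factorization domain and let f and g be nonzero Dirichlet polynomials over R with min-degrees m and n respectively, where m > n > 1, gcd(m,n) = 1, and max{deg f, deg g} ≤ 2n. Let p be a prime element of R dividing neither the min-degree coefficient f(m) nor the min-degree coefficient g(n), and let k be a positive integer such that the gcd of k together with the integers ν_q(n) − ν_q(m) for all prime numbers q dividing m·n equals 1. Then the Dirichlet polynomial f + p^k·g is irreducible over R. -/
/-!
The proof is a Newton polygon (Dumas type) argument in which the abscissa of the coefficient of
`1/i^s` is `log i` and its ordinate is the `p`-adic valuation `v` of that coefficient.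

Since `p ^ k` exactly divides `F n`, divides `F i` for `n ≤ i < m`, and `p ∤ F m`, the segment from
`(log n, k)` to `(log m, 0)` is an edge of the polygon of `F`. This edge is singled out by the
weight `W i = v(F i) * log (m/n) + k * log i`, whose minimum over the support of `F` is `k * log m`.
If `F = G * H`, then the minimal weights of `G` and `H` add up to the minimal weight of `F`
(`exists_leading_pair`, the analogue of Gauss's lemma), so that any factors
responsible for the coefficients `F n` and `F m` have minimal weight. This yields `i * j = n` and
`i' * j' = m` with `v(G i) + v(H j) = k` and, writing `α = v(G i)`,
`m ^ α * i ^ k = i' ^ k * n ^ α`. Comparing `q`-adic valuations, the gcd hypothesis forces `k ∣ α`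
(`dvd_of_pow_relation`), so `α = 0` or `α = k`, and by symmetry one may take `α = 0`. Then `i = i'`
divides both `m` and `n`, hence equals `1`, and `j' = m`. So `deg H ≥ m`, `deg G ≥ 2`, and
`deg F ≥ 2 * m > 2 * n`, a contradiction (`degree_contradiction`).
-/

namespace DirichletPoly

variable {R : Type*}

/-- Among the support elements of minimal weight `W`, there is a smallest one. -/
lemma exists_min_weight [Zero R] {G : ArithmeticFunction R} (hG : IsDP G) (hne : ∃ i, G i ≠ 0)
    (W : ℕ → ℝ) :
    ∃ a, G a ≠ 0 ∧ ∀ i, G i ≠ 0 → W a < W i ∨ (W a = W i ∧ a ≤ i) := by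
  obtain ⟨i0, hi0⟩ := hne
  obtain ⟨a, ha, hmin⟩ := Finset.exists_min_image hG.toFinset
    (fun i => toLex (W i, i)) ⟨i0, (Set.Finite.mem_toFinset hG).2 hi0⟩
  refine ⟨a, (Set.Finite.mem_toFinset hG).1 ha, fun i hi => ?_⟩
  have := hmin i ((Set.Finite.mem_toFinset hG).2 hi)
  simpa [Prod.Lex.le_iff] using this

lemma exists_max_supp [Zero R] {G : ArithmeticFunction R} (hG : IsDP G) (hne : ∃ i, G i ≠ 0) :
    ∃ a, G a ≠ 0 ∧ ∀ i, G i ≠ 0 → i ≤ a := by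
  obtain ⟨i0, hi0⟩ := hne
  obtain ⟨a, ha, hmax⟩ := Finset.exists_max_image hG.toFinset
    (fun i => i) ⟨i0, (Set.Finite.mem_toFinset hG).2 hi0⟩
  exact ⟨a, (Set.Finite.mem_toFinset hG).1 ha, fun i hi => hmax i ((Set.Finite.mem_toFinset hG).2 hi)⟩

lemma pos_of_ne [Zero R] {G : ArithmeticFunction R} {i : ℕ} (h : G i ≠ 0) : 0 < i := by
  rcases Nat.eq_zero_or_pos i with rfl | h'
  · simp at h
  · exact h'

/-- Degrees multiply, so a factor of degree at least `2` and one of degree at least `m > n`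
cannot produce a product of degree at most `2 * n`. -/
lemma degree_contradiction [CommRing R] [IsDomain R] {G H : ArithmeticFunction R}
    (hG : IsDP G) (hH : IsDP H) (hGn : Nonconst G) {m n : ℕ} (hnm : n < m)
    (hHm : H m ≠ 0) (hdeg : ∀ N, 2 * n < N → (G * H) N = 0) : False := by
  obtain ⟨i0, h2, hi0⟩ := hGn
  obtain ⟨A, hA, hAmax⟩ := exists_max_supp hG ⟨i0, hi0⟩
  obtain ⟨B, hB, hBmax⟩ := exists_max_supp hH ⟨m, hHm⟩
  have hA2 : 2 ≤ A := h2.trans (hAmax _ hi0)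
  have hBm : m ≤ B := hBmax _ hHm
  have hlt : 2 * n < A * B := by nlinarith
  have h0 := hdeg _ hlt
  rw [ArithmeticFunction.mul_apply, Finset.sum_eq_single (A, B)] at h0
  · exact mul_ne_zero hA hB h0
  · rintro ⟨x, y⟩ hxy hne
    simp only [Nat.mem_divisorsAntidiagonal] at hxy
    by_contra hxy0
    have hx := hAmax x (left_ne_zero_of_mul hxy0)
    have hy := hBmax y (right_ne_zero_of_mul hxy0)
    apply hne
    have hx' : x = A := by
      by_contra hc
      have : x < A := by omega
      have : 0 < B := pos_of_ne hB
      nlinarith [hxy.1]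
    have hy' : y = B := by
      by_contra hc
      have : y < B := by omega
      have : 0 < A := pos_of_ne hA
      nlinarith [hxy.1]
    rw [hx', hy']
  · intro h
    exfalso
    apply h
    have : 0 < A := pos_of_ne hA
    have : 0 < B := pos_of_ne hB
    simp only [Nat.mem_divisorsAntidiagonal, true_and]
    positivity

lemma exists_term_not_dvd [CommRing R] {G H : ArithmeticFunction R} {x : R} {N : ℕ}
    (h : ¬ x ∣ (G * H) N) : ∃ i j, i * j = N ∧ ¬ x ∣ G i * H j := by
  by_contra! hc
  apply h
  rw [ArithmeticFunction.mul_apply]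
  refine Finset.dvd_sum ?_
  rintro ⟨i, j⟩ hij
  exact hc i j (Nat.mem_divisorsAntidiagonal.1 hij).1

/-- The weight `v_p(G i) * L + K * log i` of the `i`-th coefficient; its level sets are the lines
parallel to an edge of slope `-K / L` in the Newton polygon. For `G i = 0` the value is junk. -/
noncomputable def weight [CommRing R] (p : R) (L K : ℝ) (G : ArithmeticFunction R) (i : ℕ) : ℝ :=
  (multiplicity p (G i) : ℝ) * L + K * Real.log i

lemma mult_mul [CommRing R] [IsDomain R] [UniqueFactorizationMonoid R] {p : R} (hp : Prime p)
    {x y : R} (hx : x ≠ 0) (hy : y ≠ 0) :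
    multiplicity p (x * y) = multiplicity p x + multiplicity p y :=
  multiplicity_mul hp (FiniteMultiplicity.of_not_isUnit hp.not_isUnit (mul_ne_zero hx hy))

lemma weight_add [CommRing R] [IsDomain R] {p : R} {L K : ℝ} {G H : ArithmeticFunction R}
    {i j : ℕ} (hi : G i ≠ 0) (hj : H j ≠ 0) :
    weight p L K G i + weight p L K H j =
      ((multiplicity p (G i) + multiplicity p (H j) : ℕ) : ℝ) * L + K * Real.log (i * j : ℕ) := by
  have h1 : (i : ℝ) ≠ 0 := by exact_mod_cast (pos_of_ne hi).ne'
  have h2 : (j : ℝ) ≠ 0 := by exact_mod_cast (pos_of_ne hj).ne'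
  unfold weight
  push_cast
  rw [Real.log_mul h1 h2]
  ring

/-- Gauss's lemma for weights: if `a` and `b` are the smallest indices of minimal weight in `G`
and `H`, then `G a * H b` is the unique term of least `p`-adic valuation in `(G * H) (a * b)`. -/
lemma exists_leading_pair [CommRing R] [IsDomain R] [UniqueFactorizationMonoid R]
    {p : R} (hp : Prime p) {L K : ℝ} (hL : 0 < L) {G H : ArithmeticFunction R}
    (hG : IsDP G) (hH : IsDP H) (hGne : ∃ i, G i ≠ 0) (hHne : ∃ i, H i ≠ 0) :
    ∃ a b, G a ≠ 0 ∧ H b ≠ 0 ∧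
      (∀ i, G i ≠ 0 → weight p L K G a ≤ weight p L K G i) ∧
      (∀ j, H j ≠ 0 → weight p L K H b ≤ weight p L K H j) ∧
      ¬ p ^ (multiplicity p (G a) + multiplicity p (H b) + 1) ∣ (G * H) (a * b) := by
  obtain ⟨a, ha, hamin⟩ := exists_min_weight hG hGne (weight p L K G)
  obtain ⟨b, hb, hbmin⟩ := exists_min_weight hH hHne (weight p L K H)
  refine ⟨a, b, ha, hb, fun i hi => ?_, fun j hj => ?_, fun hdvd => ?_⟩
  · rcases hamin i hi with h | h
    exacts [h.le, h.1.le]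
  · rcases hbmin j hj with h | h
    exacts [h.le, h.1.le]
  have ha0 := pos_of_ne ha
  have hb0 := pos_of_ne hb
  have hmem : (a, b) ∈ (a * b).divisorsAntidiagonal := by
    simp only [Nat.mem_divisorsAntidiagonal, true_and]
    positivity
  rw [ArithmeticFunction.mul_apply, ← Finset.add_sum_erase _ _ hmem] at hdvd
  have hrest : p ^ (multiplicity p (G a) + multiplicity p (H b) + 1) ∣
      ∑ x ∈ (a * b).divisorsAntidiagonal.erase (a, b), G x.1 * H x.2 := by
    refine Finset.dvd_sum ?_
    rintro ⟨i, j⟩ hij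
    rw [Finset.mem_erase, Nat.mem_divisorsAntidiagonal] at hij
    obtain ⟨hne, hij, -⟩ := hij
    simp only at hij ⊢
    by_cases hi : G i = 0
    · simp [hi]
    by_cases hj : H j = 0
    · simp [hj]
    apply pow_dvd_of_le_multiplicity
    rw [mult_mul hp hi hj]
    have e1 := weight_add (p := p) (L := L) (K := K) ha hb
    have e2 := weight_add (p := p) (L := L) (K := K) hi hj
    rw [hij] at e2
    -- Equal weight sums would give `a ≤ i` and `b ≤ j`, hence `(i, j) = (a, b)`.
    have hlt : weight p L K G a + weight p L K H b < weight p L K G i + weight p L K H j := by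
      rcases hamin i hi with h1 | h1 <;> rcases hbmin j hj with h2 | h2
      · linarith
      · linarith [h2.1]
      · linarith [h1.1]
      · exfalso
        apply hne
        have hi' : i = a := by
          by_contra hc
          have : a < i := by omega
          nlinarith [h2.2]
        have hj' : j = b := by
          subst hi'
          exact Nat.eq_of_mul_eq_mul_left ha0 hij
        rw [hi', hj']
    rw [e1, e2] at hlt
    have h3 : ((multiplicity p (G a) + multiplicity p (H b) : ℕ) : ℝ) <
        ((multiplicity p (G i) + multiplicity p (H j) : ℕ) : ℝ) :=
      lt_of_mul_lt_mul_right (by linarith) hL.le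
    exact_mod_cast h3
  have hmain := (dvd_add_left hrest).1 hdvd
  have hfin : FiniteMultiplicity p (G a * H b) :=
    FiniteMultiplicity.of_not_isUnit hp.not_isUnit (mul_ne_zero ha hb)
  have := hfin.le_multiplicity_of_pow_dvd hmain
  rw [mult_mul hp ha hb] at this
  omega

/-- Equality of weights `α * log (m/n) + k * log i = k * log i'`, cleared of logarithms. -/
lemma pow_relation {m n i i' k α : ℕ} (hm : 0 < m) (hn : 0 < n) (hi : 0 < i) (hi' : 0 < i')
    (h : (α : ℝ) * (Real.log m - Real.log n) + k * Real.log i = k * Real.log i') :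
    m ^ α * i ^ k = i' ^ k * n ^ α := by
  have hm' : (0 : ℝ) < m := by exact_mod_cast hm
  have hn' : (0 : ℝ) < n := by exact_mod_cast hn
  have hi1 : (0 : ℝ) < i := by exact_mod_cast hi
  have hi2 : (0 : ℝ) < i' := by exact_mod_cast hi'
  have : ((m : ℝ) ^ α * (i : ℝ) ^ k) = (i' : ℝ) ^ k * (n : ℝ) ^ α := by
    apply Real.log_injOn_pos (Set.mem_Ioi.2 (by positivity)) (Set.mem_Ioi.2 (by positivity))
    rw [Real.log_mul (by positivity) (by positivity), Real.log_mul (by positivity) (by positivity)]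
    simp only [Real.log_pow]
    linarith
  exact_mod_cast this

/-- The relation says that `(n / m) ^ α` is a `k`-th power of a rational number; with
`d = k / gcd k α`, every exponent of `n / m` is then divisible by `d`, so `d = 1`. -/
lemma dvd_of_pow_relation {m n i i' k α : ℕ} (hm : 0 < m) (hn : 0 < n) (hi : 0 < i) (hi' : 0 < i')
    (hk : 0 < k)
    (hgcd : ∀ d : ℕ, ((d : ℤ) ∣ (k : ℤ) ∧
      ∀ q ∈ (m * n).primeFactors,
        (d : ℤ) ∣ (n.factorization q : ℤ) - (m.factorization q : ℤ)) → d = 1)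
    (h : m ^ α * i ^ k = i' ^ k * n ^ α) : k ∣ α := by
  have hgpos : 0 < Nat.gcd k α := Nat.gcd_pos_of_pos_left _ hk
  obtain ⟨d, hd⟩ := Nat.gcd_dvd_left k α
  obtain ⟨e, he⟩ := Nat.gcd_dvd_right k α
  have hcop : Nat.Coprime d e := by
    have := Nat.coprime_div_gcd_div_gcd hgpos
    rwa [Nat.div_eq_of_eq_mul_right hgpos hd, Nat.div_eq_of_eq_mul_right hgpos he] at this
  have hd1 : d = 1 := by
    apply hgcd
    refine ⟨by exact_mod_cast Dvd.intro_left _ hd.symm, fun q _ => ?_⟩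
    have hq := congrArg (fun x => x.factorization q) h
    beta_reduce at hq
    rw [Nat.factorization_mul (by positivity) (by positivity),
      Nat.factorization_mul (by positivity) (by positivity)] at hq
    simp only [Nat.factorization_pow, Finsupp.add_apply, Finsupp.smul_apply, smul_eq_mul] at hq
    generalize Nat.gcd k α = g at *
    have hcop' : IsCoprime (d : ℤ) (e : ℤ) := Nat.isCoprime_iff_coprime.2 hcop
    refine hcop'.dvd_of_dvd_mul_left ⟨(i.factorization q : ℤ) - i'.factorization q, ?_⟩
    have hg0 : (g : ℤ) ≠ 0 := by exact_mod_cast hgpos.ne'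
    apply mul_left_cancel₀ hg0
    zify at hq hd he
    rw [hd, he] at hq
    linarith
  rw [hd1, mul_one] at hd
  rw [hd]
  exact Nat.gcd_dvd_right k α

/-- The case in which the edge of the polygon of `F` comes entirely from the factor `H`. -/
lemma degenerate_edge [CommRing R] [IsDomain R] {G H : ArithmeticFunction R}
    (hG : IsDP G) (hH : IsDP H) (hGn : Nonconst G) {m n i j i' j' k α : ℕ} (hnm : n < m)
    (hcop : Nat.gcd m n = 1) (hk : 0 < k) (hij : i * j = n) (hij' : i' * j' = m)
    (hHj' : H j' ≠ 0) (hrel : m ^ α * i ^ k = i' ^ k * n ^ α) (hα : α = 0)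
    (hdeg : ∀ N, 2 * n < N → (G * H) N = 0) : False := by
  subst hα
  simp only [pow_zero, one_mul, mul_one] at hrel
  have hii : i = i' := Nat.pow_left_injective hk.ne' hrel
  have h1 : i = 1 := by
    apply Nat.eq_one_of_dvd_one
    rw [← hcop]
    exact Nat.dvd_gcd (hii ▸ Dvd.intro _ hij') (Dvd.intro _ hij)
  have hj : j' = m := by rw [← hij', ← hii, h1, one_mul]
  exact degree_contradiction hG hH hGn hnm (hj ▸ hHj') hdeg

/-- Cavachi-type criterion via min-degrees. -/
theorem linear_combination_irreducible_min_degrees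
    [CommRing R] [IsDomain R] [UniqueFactorizationMonoid R]
    (f g : ArithmeticFunction R) (hf : IsDP f) (hg : IsDP g)
    (m n : ℕ) (hnm : n < m) (hn1 : 1 < n) (hcop : Nat.gcd m n = 1)
    (hfm : f m ≠ 0) (hf' : ∀ i : ℕ, i < m → f i = 0)
    (hgn : g n ≠ 0) (hg' : ∀ i : ℕ, i < n → g i = 0)
    (hdegf : ∀ i : ℕ, 2 * n < i → f i = 0)
    (hdegg : ∀ i : ℕ, 2 * n < i → g i = 0)
    (p : R) (hp : Prime p) (hpf : ¬ p ∣ f m) (hpg : ¬ p ∣ g n)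
    (k : ℕ) (hk : 0 < k)
    (hgcd : ∀ d : ℕ, ((d : ℤ) ∣ (k : ℤ) ∧
      ∀ q ∈ (m * n).primeFactors,
        (d : ℤ) ∣ (n.factorization q : ℤ) - (m.factorization q : ℤ)) → d = 1)
    (F : ArithmeticFunction R) (hF : ∀ i : ℕ, F i = f i + p ^ k * g i) :
    IrreducibleDP F := by
  rintro ⟨G, H, hG, hH, hGn, hHn, rfl⟩
  have hn0 : 0 < n := by omega
  have hm0 : 0 < m := by omega
  have hnR : (0 : ℝ) < n := by exact_mod_cast hn0
  have hmR : (0 : ℝ) < m := by exact_mod_cast hm0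
  have hkR : (0 : ℝ) < k := by exact_mod_cast hk
  have hdeg : ∀ N, 2 * n < N → (G * H) N = 0 := fun N hN => by
    rw [hF, hdegf N hN, hdegg N hN]; simp
  set L : ℝ := Real.log m - Real.log n with hLdef
  have hL : 0 < L := sub_pos.2 (Real.log_lt_log hnR (by exact_mod_cast hnm))
  obtain ⟨i0, _, hi0⟩ := id hGn
  obtain ⟨j0, _, hj0⟩ := id hHn
  obtain ⟨a, b, ha, hb, hamin, hbmin, hab⟩ :=
    exists_leading_pair (K := (k : ℝ)) hp hL hG hH ⟨i0, hi0⟩ ⟨j0, hj0⟩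
  -- The minimal weights of the factors add up to at least the minimal weight of the product.
  have hw : (k : ℝ) * Real.log m ≤ weight p L k G a + weight p L k H b := by
    rw [weight_add ha hb]
    have hc0 : (0 : ℝ) ≤ ((multiplicity p (G a) + multiplicity p (H b) : ℕ) : ℝ) :=
      Nat.cast_nonneg _
    have hne : (G * H) (a * b) ≠ 0 := fun h => hab (h ▸ dvd_zero _)
    have hnab : n ≤ a * b := by
      by_contra hc
      apply hne
      rw [hF, hf' _ (by omega), hg' _ (by omega)]
      simp
    rcases lt_or_ge (a * b) m with hlt | hge
    · have hck : k ≤ multiplicity p (G a) + multiplicity p (H b) := by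
        by_contra hc
        apply hab
        rw [hF, hf' _ hlt, zero_add]
        exact (pow_dvd_pow p (by omega)).mul_right _
      have hckR : (k : ℝ) ≤ ((multiplicity p (G a) + multiplicity p (H b) : ℕ) : ℝ) := by
        exact_mod_cast hck
      have hlog : Real.log n ≤ Real.log (a * b : ℕ) :=
        Real.log_le_log hnR (by exact_mod_cast hnab)
      have := mul_le_mul_of_nonneg_right hckR hL.le
      have := mul_le_mul_of_nonneg_left hlog hkR.le
      have : (k : ℝ) * Real.log m = k * L + k * Real.log n := by rw [hLdef]; ring
      linarith
    · have hlog : Real.log m ≤ Real.log (a * b : ℕ) :=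
        Real.log_le_log hmR (by exact_mod_cast hge)
      have := mul_le_mul_of_nonneg_left hlog hkR.le
      have := mul_nonneg hc0 hL.le
      linarith
  have hFn : ¬ p ^ (k + 1) ∣ (G * H) n := by
    rw [hF, hf' n hnm, zero_add, pow_succ]
    exact fun h => hpg ((mul_dvd_mul_iff_left (pow_ne_zero _ hp.ne_zero)).1 h)
  have hFm : ¬ p ∣ (G * H) m := by
    rw [hF]
    exact fun h => hpf ((dvd_add_left ((dvd_pow_self p hk.ne').mul_right _)).1 h)
  obtain ⟨i, j, hij, hijp⟩ := exists_term_not_dvd hFn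
  obtain ⟨i', j', hij', hijp'⟩ := exists_term_not_dvd hFm
  have hGi : G i ≠ 0 := fun h => hijp (by simp [h])
  have hHj : H j ≠ 0 := fun h => hijp (by simp [h])
  have hGi' : G i' ≠ 0 := fun h => hijp' (by simp [h])
  have hHj' : H j' ≠ 0 := fun h => hijp' (by simp [h])
  have hαβ : multiplicity p (G i) + multiplicity p (H j) ≤ k := by
    by_contra hc
    apply hijp
    apply pow_dvd_of_le_multiplicity
    rw [mult_mul hp hGi hHj]
    omega
  have hα' : multiplicity p (G i') = 0 :=
    multiplicity_eq_zero.2 fun h => hijp' (h.mul_right _)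
  have hβ' : multiplicity p (H j') = 0 :=
    multiplicity_eq_zero.2 fun h => hijp' (h.mul_left _)
  have e1 := weight_add (p := p) (L := L) (K := (k : ℝ)) hGi hHj
  have e2 := weight_add (p := p) (L := L) (K := (k : ℝ)) hGi' hHj'
  rw [hij] at e1
  rw [hij', hα', hβ'] at e2
  simp only [add_zero, Nat.cast_zero, zero_mul, zero_add] at e2
  have hαβR : ((multiplicity p (G i) + multiplicity p (H j) : ℕ) : ℝ) ≤ k := by
    exact_mod_cast hαβ
  have hmulL := mul_le_mul_of_nonneg_right hαβR hL.le
  have hkL : (k : ℝ) * Real.log m = k * L + k * Real.log n := by rw [hLdef]; ring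
  have g1 := hamin i hGi
  have g2 := hamin i' hGi'
  have g3 := hbmin j hHj
  have g4 := hbmin j' hHj'
  have hWG : weight p L k G i = weight p L k G i' := by linarith
  have hWH : weight p L k H j = weight p L k H j' := by linarith
  have hsum : multiplicity p (G i) + multiplicity p (H j) = k := by
    have h1 : ((multiplicity p (G i) + multiplicity p (H j) : ℕ) : ℝ) * L = k * L := by linarith
    exact_mod_cast mul_right_cancel₀ hL.ne' h1
  unfold weight at hWG hWH
  rw [hα', Nat.cast_zero, zero_mul, zero_add] at hWG
  rw [hβ', Nat.cast_zero, zero_mul, zero_add] at hWH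
  have rG := pow_relation hm0 hn0 (pos_of_ne hGi) (pos_of_ne hGi') hWG
  have rH := pow_relation hm0 hn0 (pos_of_ne hHj) (pos_of_ne hHj') hWH
  have hdvd := dvd_of_pow_relation hm0 hn0 (pos_of_ne hGi) (pos_of_ne hGi') hk hgcd rG
  rcases Nat.eq_zero_or_pos (multiplicity p (G i)) with h0 | hpos
  · exact degenerate_edge hG hH hGn hnm hcop hk hij hij' hHj' rG h0 hdeg
  · have := Nat.le_of_dvd hpos hdvd
    exact degenerate_edge hH hG hHn hnm hcop hk (by rw [mul_comm, hij]) (by rw [mul_comm, hij'])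
      hGi' rH (by omega) (by rwa [mul_comm H G])

end DirichletPoly
end
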